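/- Let q be a prime power, n ≥ 1, and d_1, ..., d_t positive integers with d := ∑ d_i ≤ n. Set r = ⌈(n - d)/max_i(d_i)⌉. Then for any homogeneous polynomials F_1, ..., F_t over F_q of degrees d_1, ..., d_t in n+1 variables, the number of points of the projective zero set Z(F_1,...,F_t) in P^n(F_q) is congruent to |P^{r-1}(F_q)| = 1 + q + ... + q^{r-1} modulo q^r, provided r ≥ 1. (Case t = 1, d_1 = 1: a hyperplane in P^n has exactly 1 + q + ... + q^{n-1} points.) -/

import Mathlib

open MvPolynomial


/-- digit sum -/
def axSg (p b : ℕ) : ℕ := (Nat.digits p b).sum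

theorem axSg_rec {p : ℕ} (hp : 1 < p) (b : ℕ) : axSg p b = b % p + axSg p (b / p) := by
  unfold axSg
  rcases Nat.eq_zero_or_pos b with rfl | hb
  · simp
  · rw [Nat.digits_def' hp hb]; simp

theorem axSg_zero (p : ℕ) : axSg p 0 = 0 := by simp [axSg]

theorem axSg_mul {p : ℕ} (hp : 1 < p) (b : ℕ) : axSg p (p * b) = axSg p b := by
  rw [axSg_rec hp]
  rw [Nat.mul_mod_right, Nat.mul_div_cancel_left _ (by omega)]; simp

theorem axSg_succ {p : ℕ} (hp : 1 < p) (b : ℕ) (h : ¬ p ∣ b + 1) :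
    axSg p (b + 1) = axSg p b + 1 := by
  rw [axSg_rec hp, axSg_rec hp b, Nat.succ_div_of_not_dvd h]
  have : (b + 1) % p = b % p + 1 := by
    rw [Nat.add_mod, Nat.mod_eq_of_lt hp]
    apply Nat.mod_eq_of_lt
    have h1 := Nat.mod_lt b (show 0 < p by omega)
    by_contra h2
    apply h
    have h3 : b % p + 1 = p := by omega
    have := Nat.div_add_mod b p
    exact ⟨b / p + 1, by rw [mul_add]; omega⟩
  omega

theorem axSg_compl {p : ℕ} (hp : 1 < p) (f : ℕ) : ∀ b, b < p ^ f →
    axSg p (p ^ f - 1 - b) + axSg p b = f * (p - 1) := by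
  induction f with
  | zero => intro b hb; have : b = 0 := by simpa using hb
            subst this; simp [axSg_zero]
  | succ f ih =>
    intro b hb
    have hb1 : b / p < p ^ f := by
      apply Nat.div_lt_of_lt_mul; rwa [← pow_succ']
    have h1 := Nat.mod_lt b (show 0 < p by omega)
    have h0 := Nat.div_add_mod b p
    obtain ⟨c, hc⟩ : ∃ c, p ^ f = b / p + 1 + c := ⟨p^f - (b/p+1), by omega⟩
    have e : p ^ (f+1) - 1 - b = (p - 1 - b % p) + p * (p ^ f - 1 - b / p) := by
      have e1 : p ^ f - 1 - b / p = c := by omega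
      rw [e1, pow_succ', hc, mul_add, mul_add]
      omega
    have h2 : p - 1 - b % p < p := by omega
    rw [axSg_rec hp, axSg_rec hp b, e, Nat.add_mul_mod_self_left, Nat.mod_eq_of_lt h2,
      Nat.add_mul_div_left _ _ (by omega), Nat.div_eq_of_lt h2, zero_add, add_mul]
    have := ih _ hb1
    omega

theorem axSg_legendre {p : ℕ} (hp : 1 < p) (f : ℕ) : ∀ b, b < p ^ f →
    axSg p b + (p - 1) * ∑ j ∈ Finset.range f, b / p ^ (j + 1) = b := by
  induction f with
  | zero => intro b hb; have : b = 0 := by simpa using hb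
            subst this; simp [axSg_zero]
  | succ f ih =>
    intro b hb
    have hb1 : b / p < p ^ f := by
      apply Nat.div_lt_of_lt_mul; rwa [← pow_succ']
    have h0 := Nat.div_add_mod b p
    have := ih _ hb1
    rw [axSg_rec hp, Finset.sum_range_succ']
    have e : ∑ j ∈ Finset.range f, b / p ^ (j + 1 + 1) = ∑ j ∈ Finset.range f, b / p / p ^ (j + 1) :=
      Finset.sum_congr rfl fun j _ => by rw [Nat.div_div_eq_div_mul, ← pow_succ']
    rw [e, zero_add, pow_one]
    rw [mul_add]
    have : (p - 1) * (b / p) + b / p = p * (b / p) := by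
      obtain ⟨a, rfl⟩ : ∃ a, p = a + 1 := ⟨p-1, by omega⟩
      simp; ring
    omega

/-- rotation of base `p` digits -/
def axRot (p f j b : ℕ) : ℕ := b / p ^ (j + 1) + p ^ (f - (j + 1)) * (b % p ^ (j + 1))

theorem axRot_spec {p f j : ℕ} (hp : 1 < p) (hj : j < f) (b : ℕ) :
    axRot p f j b + (p ^ f - 1) * (b / p ^ (j + 1)) = p ^ (f - (j + 1)) * b := by
  unfold axRot
  have h0 := Nat.div_add_mod b (p ^ (j+1))
  have h1 : p ^ f = p ^ (f - (j+1)) * p ^ (j+1) := by rw [← pow_add]; congr 1; omega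
  have h2 : 0 < p ^ f := by positivity
  have h3 : (p ^ f - 1) * (b / p ^ (j + 1)) + b / p ^ (j+1) = p ^ f * (b / p ^ (j + 1)) := by
    obtain ⟨a, ha⟩ : ∃ a, p ^ f = a + 1 := ⟨p^f-1, by omega⟩
    rw [ha]; simp; ring
  have h4 : p ^ (f - (j + 1)) * b = p ^ f * (b / p ^ (j + 1)) + p ^ (f - (j + 1)) * (b % p ^ (j + 1)) := by
    rw [h1, mul_assoc, ← mul_add, h0]
  omega

theorem axRot_eq_zero {p f j : ℕ} (hp : 1 < p) (b : ℕ) : axRot p f j b = 0 ↔ b = 0 := by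
  unfold axRot
  constructor
  · intro h
    have h0 := Nat.div_add_mod b (p ^ (j+1))
    have h2 : 0 < p ^ (f - (j+1)) := by positivity
    have h3 : b / p ^ (j+1) = 0 := (Nat.add_eq_zero_iff.1 h).1
    have h4 : b % p ^ (j+1) = 0 := by
      have : p ^ (f - (j + 1)) * (b % p ^ (j + 1)) = 0 := (Nat.add_eq_zero_iff.1 h).2
      rcases Nat.mul_eq_zero.1 this with h | h
      · omega
      · exact h
    rw [h3, h4] at h0; omega
  · rintro rfl; simp

theorem axRot_sum {p f : ℕ} (hp : 1 < p) (b : ℕ) (hb : b < p ^ f) :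
    (p - 1) * ∑ j ∈ Finset.range f, axRot p f j b = (p ^ f - 1) * axSg p b := by
  have h1 := axSg_legendre hp f b hb
  have h2 : ∑ j ∈ Finset.range f, axRot p f j b
      + (p ^ f - 1) * ∑ j ∈ Finset.range f, b / p ^ (j + 1)
      = (∑ j ∈ Finset.range f, p ^ j) * b := by
    rw [← Finset.sum_range_reflect (fun j => p ^ j) f, Finset.mul_sum, ← Finset.sum_add_distrib,
      Finset.sum_mul]
    refine Finset.sum_congr rfl fun j hj => ?_
    rw [axRot_spec hp (Finset.mem_range.1 hj)]
    congr 2; omega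
  have h3 : (p - 1) * (∑ j ∈ Finset.range f, p ^ j) = p ^ f - 1 := by
    have := Nat.geomSum_eq (show 2 ≤ p by omega) f
    rw [this, Nat.mul_div_cancel']
    simpa using Nat.sub_dvd_pow_sub_pow p 1 f
  set S := ∑ j ∈ Finset.range f, axRot p f j b
  set D := ∑ j ∈ Finset.range f, b / p ^ (j + 1)
  have h4 : (p-1) * S + (p ^ f - 1) * ((p-1) * D) = (p ^ f - 1) * b := by
    calc _ = (p-1) * (S + (p ^ f - 1) * D) := by ring
      _ = _ := by rw [h2, ← mul_assoc, h3]
  have h5 : (p ^ f - 1) * axSg p b + (p ^ f - 1) * ((p-1) * D) = (p ^ f - 1) * b := by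
    rw [← mul_add, h1]
  omega


theorem ax_ring.{u} (k : Type u) [Field k] [Finite k] (p : ℕ) [Fact p.Prime] [CharP k p] :
    ∃ (L : Type u) (_ : Field L) (A : ValuationSubring L) (ζ : A) (τ : k →*₀ A)
      (ι : k →+* IsLocalRing.ResidueField A), CharZero A ∧ IsPrimitiveRoot ζ p ∧
      (∀ x, IsLocalRing.residue A (τ x) = ι x) := by
  classical
  have : CharZero (WittVector p k) := by
    obtain ⟨c, hc⟩ := CharP.exists (WittVector p k)
    rcases CharP.char_is_prime_or_zero (WittVector p k) c with h | rfl
    · exfalso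
      have h1 : ((c : ℕ) : WittVector p k) = 0 := CharP.cast_eq_zero _ _
      have h2 : ((c : ℕ) : k) = 0 := by
        have := congrArg (WittVector.constantCoeff (p := p) (R := k)) h1
        rwa [map_natCast, map_zero] at this
      have h3 : p ∣ c := (CharP.cast_eq_zero_iff k p c).1 h2
      have h4 : p = c := (Nat.prime_dvd_prime_iff_eq Fact.out h).1 h3
      subst h4
      have h5 := WittVector.coeff_p (p := p) (R := k) 1
      rw [h1] at h5
      simp at h5
    · exact CharP.charP_to_charZero _
  let K := FractionRing (WittVector p k)
  let L := AlgebraicClosure K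
  have : CharZero K := charZero_of_injective_algebraMap (IsFractionRing.injective (WittVector p k) K)
  have : CharZero L := charZero_of_injective_algebraMap (algebraMap K L).injective
  let g : WittVector p k →+* L := (algebraMap K L).comp (algebraMap (WittVector p k) K)
  obtain ⟨A, h, hloc⟩ := IsLocalRing.exists_factor_valuationRing g
  have : NeZero (p : L) := ⟨by exact_mod_cast (Fact.out : p.Prime).ne_zero⟩
  obtain ⟨z, hz⟩ := HasEnoughRootsOfUnity.exists_primitiveRoot L p
  have hzA : z ∈ A := by
    have := hz.pow_eq_one
    have h2 : A.valuation z ^ p = 1 := by rw [← map_pow, this, map_one]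
    rw [← A.valuation_le_one_iff]
    exact ((pow_eq_one_iff.1 h2).resolve_right (Fact.out : p.Prime).ne_zero).le
  let f : WittVector p k →+* A := g.codRestrict A.toSubring h
  have hf : IsLocalHom f := hloc
  let τ : k →*₀ A := 
    { toFun := fun x => f (WittVector.teichmuller p x)
      map_zero' := by simp
      map_one' := by simp
      map_mul' := by simp }
  have key : ∀ w : WittVector p k, w.coeff 0 = 0 → IsLocalRing.residue A (f w) = 0 := by
    intro w hw
    rw [IsLocalRing.residue_eq_zero_iff, IsLocalRing.mem_maximalIdeal, mem_nonunits_iff]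
    intro hu
    have h1 : IsUnit w := hf.map_nonunit w hu
    have h2 := h1.map (WittVector.constantCoeff (p := p) (R := k))
    rw [WittVector.constantCoeff_apply, hw] at h2
    exact not_isUnit_zero h2
  let ι : k →+* IsLocalRing.ResidueField A := 
    { toFun := fun x => IsLocalRing.residue A (τ x)
      map_zero' := by simp
      map_one' := by simp
      map_mul' := by simp
      map_add' := by
        intro x y
        rw [← map_add, ← sub_eq_zero, ← map_sub]
        have := key (WittVector.teichmuller p (x+y) - (WittVector.teichmuller p x + WittVector.teichmuller p y)) (by
          rw [← WittVector.constantCoeff_apply, map_sub, map_add WittVector.constantCoeff]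
          simp [WittVector.constantCoeff_apply])
        simpa [τ] using this }
  refine ⟨L, inferInstance, A, ⟨z, hzA⟩, τ, ι, ?_, ?_, fun x => rfl⟩
  · exact (algebraMap A L).charZero
  · exact IsPrimitiveRoot.of_map_of_injective (f := A.subtype) hz Subtype.val_injective


section
variable {k A : Type*} [Field k] [Fintype k] [CommRing A] [IsDomain A] [IsLocalRing A]
  [CharZero A] {p : ℕ} [hp : Fact p.Prime] [CharP k p] [Algebra (ZMod p) k]
  (ζ : A) (τ : k →*₀ A)
  (ι : k →+* IsLocalRing.ResidueField A)

set_option linter.unusedSectionVars false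

/-- the standard additive character -/
noncomputable def axPsi (k : Type*) [Field k] [Algebra (ZMod p) k] {A : Type*} [CommRing A] {ζ : A}
    (hζ : ζ ^ p = 1) : AddChar k A :=
  (AddChar.zmodChar p hζ).compAddMonoidHom (Algebra.trace (ZMod p) k).toAddMonoidHom

/-- the inverse Teichmuller character -/
noncomputable def axChi (τ : k →*₀ A) : MulChar k A :=
  (MulChar.ofUnitHom (Units.map (τ : k →* A)))⁻¹

theorem axPsi_apply {ζ : A} (hζ : ζ ^ p = 1) (x : k) :
    axPsi k hζ x = ζ ^ (Algebra.trace (ZMod p) k x).val := by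
  simp [axPsi, AddChar.zmodChar_apply]

theorem axChi_apply (x : k) (hx : x ≠ 0) : axChi τ x = τ x⁻¹ := by
  have h := MulChar.inv_apply' (MulChar.ofUnitHom (Units.map (τ : k →* A))) x
  rw [axChi, h]
  have := MulChar.ofUnitHom_coe (Units.map (τ : k →* A)) (Units.mk0 x⁻¹ (inv_ne_zero hx))
  simpa using this


theorem axChi_pow_apply (x : k) (hx : x ≠ 0) (m : ℕ) : (axChi τ ^ m) x = τ (x⁻¹) ^ m := by
  have := MulChar.pow_apply_coe (axChi τ) m (Units.mk0 x hx)
  rw [Units.val_mk0] at this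
  rw [this, axChi_apply τ x hx]

theorem ax_assoc {ζ : A} (hζ : IsPrimitiveRoot ζ p) : Associated ((ζ - 1) ^ (p - 1)) (p : A) := by
  obtain ⟨n, rfl⟩ : ∃ n, p = n + 1 := ⟨p - 1, by have := hp.out.pos; omega⟩
  have h := hζ.prod_one_sub_pow_eq_order
  push_cast
  rw [← h]
  have : (ζ - 1) ^ n = ∏ i ∈ Finset.range n, (ζ - 1) := by simp
  rw [this]
  refine Associated.prod _ _ _ fun i hi => ?_
  have hi := Finset.mem_range.1 hi
  have h2 : (i + 1).Coprime (n + 1) := by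
    apply Nat.Coprime.symm
    rw [hp.out.coprime_iff_not_dvd]
    intro hd
    have := Nat.le_of_dvd (by omega) hd
    omega
  have := hζ.associated_sub_one_pow_sub_one_of_coprime h2
  rw [← neg_sub (ζ ^ (i + 1))]
  exact this.neg_right

theorem ax_charP (ι : k →+* IsLocalRing.ResidueField A) :
    CharP (IsLocalRing.ResidueField A) p := charP_of_injective_ringHom ι.injective p

theorem ax_res_zeta {ζ : A} (hζ : ζ ^ p = 1) (ι : k →+* IsLocalRing.ResidueField A) :
    IsLocalRing.residue A ζ = 1 := by
  have := ax_charP (p := p) ι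
  have h1 : (IsLocalRing.residue A ζ - 1) ^ p = 0 := by
    rw [sub_pow_char, ← map_pow, hζ]; simp
  exact sub_eq_zero.1 (pow_eq_zero_iff hp.out.ne_zero |>.1 h1)

theorem ax_zeta_pow (ζ : A) (t : ℕ) : ∃ e, ζ ^ t = 1 + t * (ζ - 1) + (ζ - 1) ^ 2 * e := by
  induction t with
  | zero => exact ⟨0, by simp⟩
  | succ t ih =>
    obtain ⟨e, he⟩ := ih
    refine ⟨t + e * ζ, ?_⟩
    rw [pow_succ, he]; push_cast; ring

theorem ax_tau_inj {τ : k →*₀ A} {ι : k →+* IsLocalRing.ResidueField A}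
    (hι : ∀ x, IsLocalRing.residue A (τ x) = ι x) : Function.Injective τ := by
  intro x y h
  apply ι.injective
  rw [← hι, ← hι, h]

theorem axChi_pow_eq_one {τ : k →*₀ A} {ι : k →+* IsLocalRing.ResidueField A}
    (hι : ∀ x, IsLocalRing.residue A (τ x) = ι x) (m : ℕ) :
    axChi τ ^ m = 1 ↔ Fintype.card k - 1 ∣ m := by
  rw [← FiniteField.forall_pow_eq_one_iff]
  constructor
  · intro h x
    have h1 : (axChi τ ^ m) ((x⁻¹ : kˣ) : k) = 1 := by rw [h, MulChar.one_apply_coe]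
    rw [axChi_pow_apply τ _ (Units.ne_zero _), ← map_pow] at h1
    have := ax_tau_inj hι (h1.trans (map_one τ).symm)
    ext
    simpa using this
  · intro h
    ext x
    rw [axChi_pow_apply τ _ (Units.ne_zero _), MulChar.one_apply_coe, ← map_pow]
    have := congrArg Units.val (h x⁻¹)
    push_cast at this
    rw [this, map_one]

theorem axPsi_frob {ζ : A} (hζ : ζ ^ p = 1) (x : k) : axPsi k hζ (x ^ p) = axPsi k hζ x := by
  rw [axPsi_apply, axPsi_apply]
  congr 2
  have := Algebra.trace_eq_of_algEquiv (FiniteField.frobeniusAlgEquivOfAlgebraic (ZMod p) k) x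
  simpa using this

theorem axPsi_primitive {ζ : A} (hζ : IsPrimitiveRoot ζ p) :
    (axPsi k hζ.pow_eq_one).IsPrimitive := by
  apply AddChar.IsPrimitive.of_ne_one
  rw [AddChar.ne_one_iff]
  obtain ⟨x, hx⟩ := Algebra.trace_surjective (ZMod p) k 1
  refine ⟨x, ?_⟩
  rw [axPsi_apply, hx, ZMod.val_one, pow_one]
  exact hζ.ne_one hp.out.one_lt

theorem ax_gauss_frob {ζ : A} (hζ : ζ ^ p = 1) (m : ℕ) :
    gaussSum (axChi τ ^ (p * m)) (axPsi k hζ) = gaussSum (axChi τ ^ m) (axPsi k hζ) := by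
  unfold gaussSum
  refine Fintype.sum_bijective (fun x : k => x ^ p) (frobeniusEquiv k p).bijective _ _ fun x => ?_
  rw [axPsi_frob]
  congr 1
  rw [map_pow]
  rcases eq_or_ne x 0 with rfl | hx
  · rw [MulChar.map_zero, MulChar.map_zero, zero_pow hp.out.ne_zero]
  · rw [axChi_pow_apply τ x hx, axChi_pow_apply τ x hx, ← pow_mul, mul_comm]

theorem ax_sum_trace (hq : 2 < Fintype.card k) :
    ∑ x : k, x⁻¹ * algebraMap (ZMod p) k (Algebra.trace (ZMod p) k x) = -1 := by
  classical
  simp_rw [FiniteField.algebraMap_trace_eq_sum_pow, Finset.mul_sum]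
  rw [Finset.sum_comm]
  have hc : Fintype.card k = p ^ Module.finrank (ZMod p) k := by
    rw [Module.card_eq_pow_finrank (K := ZMod p), ZMod.card]
  have hf : 0 < Module.finrank (ZMod p) k := Module.finrank_pos
  obtain ⟨f, hf'⟩ : ∃ f, Module.finrank (ZMod p) k = f + 1 := ⟨_, (Nat.succ_pred_eq_of_pos hf).symm⟩
  rw [hf'] at hc ⊢
  rw [Nat.card_zmod, Finset.sum_range_succ', Finset.sum_eq_zero, zero_add]
  · simp only [pow_zero, pow_one]
    rw [← Finset.add_sum_erase _ _ (Finset.mem_univ (0 : k))]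
    rw [Finset.sum_congr rfl (g := fun _ => (1 : k)) (fun x hx => inv_mul_cancel₀ (Finset.ne_of_mem_erase hx))]
    rw [Finset.sum_const, Finset.card_erase_of_mem (Finset.mem_univ _), Finset.card_univ, nsmul_eq_mul,
      Nat.cast_sub (by omega), Nat.cast_card_eq_zero]
    simp
  · intro i hi
    have hi := Finset.mem_range.1 hi
    have h1 : p ^ (i + 1) < p ^ (f + 1) := Nat.pow_lt_pow_right hp.out.one_lt (by omega)
    have h2 : 1 < p ^ (i + 1) := Nat.one_lt_pow (by omega) hp.out.one_lt
    rw [← FiniteField.sum_pow_lt_card_sub_one k (p ^ (i + 1) - 1) (by omega)]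
    refine Finset.sum_congr rfl fun x _ => ?_
    rcases eq_or_ne x 0 with rfl | hx
    · rw [inv_zero, zero_mul, zero_pow (by omega)]
    · rw [← Nat.sub_add_cancel h2.le, pow_succ x]
      rw [mul_comm, mul_assoc, mul_inv_cancel₀ hx]; simp

theorem ax_gamma {ζ : A} (hζ : IsPrimitiveRoot ζ p) {τ : k →*₀ A}
    {ι : k →+* IsLocalRing.ResidueField A}
    (hι : ∀ x, IsLocalRing.residue A (τ x) = ι x) (hq : 2 < Fintype.card k) :
    Associated (gaussSum (axChi τ) (axPsi k hζ.pow_eq_one)) (ζ - 1) := by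
  have hχ : axChi τ ≠ 1 := by
    intro h
    have := (axChi_pow_eq_one hι 1).1 (by rw [pow_one, h])
    have := Nat.le_of_dvd one_pos this
    omega
  choose e he using fun x : k => ax_zeta_pow ζ (Algebra.trace (ZMod p) k x).val
  set T := ∑ x : k, axChi τ x * ((Algebra.trace (ZMod p) k x).val : A) with hT
  set E := ∑ x : k, axChi τ x * e x with hE
  have h1 : gaussSum (axChi τ) (axPsi k hζ.pow_eq_one) = (ζ - 1) * (T + (ζ - 1) * E) := by
    unfold gaussSum
    have h0 := MulChar.sum_eq_zero_of_ne_one hχ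
    rw [← add_zero ((ζ - 1) * (T + (ζ - 1) * E)), ← h0, hT, hE, Finset.mul_sum,
      ← Finset.sum_add_distrib, Finset.mul_sum, ← Finset.sum_add_distrib]
    refine Finset.sum_congr rfl fun x _ => ?_
    rw [axPsi_apply, he]; ring
  have h2 : IsUnit (T + (ζ - 1) * E) := by
    rw [← IsLocalRing.residue_ne_zero_iff_isUnit]
    rw [map_add, map_mul, map_sub, ax_res_zeta hζ.pow_eq_one ι, map_one, sub_self, zero_mul, add_zero]
    have h3 : IsLocalRing.residue A T = ι (-1) := by
      rw [← ax_sum_trace (k := k) (p := p) hq, hT, map_sum, map_sum]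
      refine Finset.sum_congr rfl fun x _ => ?_
      rw [map_mul, map_mul, map_natCast]
      congr 1
      · rcases eq_or_ne x 0 with rfl | hx
        · rw [MulChar.map_zero]; simp
        · rw [axChi_apply τ x hx, hι]
      · rw [← map_natCast ι]
        congr 1
        conv_rhs => rw [← ZMod.natCast_zmod_val (Algebra.trace (ZMod p) k x)]
        rw [map_natCast]
    rw [h3]
    simp
  rw [h1]
  exact associated_mul_unit_left _ _ h2
end


section
variable {k A : Type*} [Field k] [Fintype k] [CommRing A] [IsDomain A] [IsLocalRing A]
  [CharZero A] {p : ℕ} [hp : Fact p.Prime] [CharP k p] [Algebra (ZMod p) k]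
set_option linter.unusedSectionVars false

theorem ax_gauss_dvd {ζ : A} (hζ : IsPrimitiveRoot ζ p) {τ : k →*₀ A}
    {ι : k →+* IsLocalRing.ResidueField A}
    (hι : ∀ x, IsLocalRing.residue A (τ x) = ι x) (b : ℕ) (hb0 : 0 < b)
    (hb : b < Fintype.card k - 1) :
    gaussSum (axChi τ ^ b) (axPsi k hζ.pow_eq_one) ∣
      gaussSum (axChi τ) (axPsi k hζ.pow_eq_one) ^ axSg p b := by
  induction b using Nat.strong_induction_on with
  | _ b ih =>
  have hp1 := hp.out.one_lt
  by_cases hd : p ∣ b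
  · obtain ⟨c, rfl⟩ := hd
    rw [ax_gauss_frob, axSg_mul hp1]
    have hc0 : 0 < c := Nat.pos_of_mul_pos_left hb0
    have : c < p * c := by nlinarith
    exact ih c this hc0 (by omega)
  · obtain ⟨c, rfl⟩ : ∃ c, b = c + 1 := ⟨b - 1, by omega⟩
    rw [axSg_succ hp1 c hd]
    rcases Nat.eq_zero_or_pos c with rfl | hc
    · simp [axSg_zero]
    · have h1 := ih c (by omega) hc (by omega)
      have h2 : axChi τ ^ c * axChi τ ≠ 1 := by
        rw [← pow_succ]
        intro h
        have := Nat.le_of_dvd (by omega) ((axChi_pow_eq_one hι _).1 h)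
        omega
      have h3 := jacobiSum_mul_nontrivial h2 (axPsi k hζ.pow_eq_one)
      rw [pow_succ, pow_succ]
      exact (Dvd.intro _ h3).trans (mul_dvd_mul_right h1 _)

theorem ax_stickelberger {ζ : A} (hζ : IsPrimitiveRoot ζ p) {τ : k →*₀ A}
    {ι : k →+* IsLocalRing.ResidueField A}
    (hι : ∀ x, IsLocalRing.residue A (τ x) = ι x) (f : ℕ) (hf : Fintype.card k = p ^ f)
    (m : ℕ) (hm0 : 0 < m) (hm : m < Fintype.card k - 1) :
    (p : A) ^ (∑ j ∈ Finset.range f, axRot p f j m) ∣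
      gaussSum (axChi τ ^ m) (axPsi k hζ.pow_eq_one) ^ (Fintype.card k - 1) := by
  have hp1 := hp.out.one_lt
  have hγ := ax_gamma hζ hι (by omega)
  have hγp : Associated (gaussSum (axChi τ) (axPsi k hζ.pow_eq_one) ^ (p - 1)) (p : A) :=
    (hγ.pow_pow).trans (ax_assoc hζ)
  set γ := gaussSum (axChi τ) (axPsi k hζ.pow_eq_one)
  have hpA : (p : A) ≠ 0 := by exact_mod_cast hp.out.ne_zero
  have hγ0 : γ ≠ 0 := by
    intro h
    rw [h, zero_pow (by omega)] at hγp
    exact hpA ((associated_zero_iff_eq_zero _).1 hγp.symm)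
  obtain ⟨b, hb⟩ : ∃ b, b = Fintype.card k - 1 - m := ⟨_, rfl⟩
  have hχm : axChi τ ^ m ≠ 1 := by
    intro h
    have := Nat.le_of_dvd (by omega) ((axChi_pow_eq_one hι _).1 h)
    omega
  have hinv : (axChi τ ^ m)⁻¹ = axChi τ ^ b := by
    apply inv_eq_of_mul_eq_one_right
    rw [← pow_add, axChi_pow_eq_one hι]
    exact dvd_of_eq (by omega)
  have h1 := gaussSum_mul_gaussSum_eq_card hχm (axPsi_primitive (k := k) hζ)
  have h2 := mul_gaussSum_inv_eq_gaussSum (axChi τ ^ b) (axPsi k hζ.pow_eq_one)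
  rw [hinv] at h1
  have h3 := ax_gauss_dvd hζ hι b (by omega) (by omega)
  have hsg : axSg p b + axSg p m = f * (p - 1) := by
    have := axSg_compl hp1 f m (by omega)
    rwa [hb, hf]
  have key : γ ^ axSg p m ∣ gaussSum (axChi τ ^ m) (axPsi k hζ.pow_eq_one) := by
    have h4 : γ ^ axSg p b * γ ^ axSg p m ∣
        γ ^ axSg p b * gaussSum (axChi τ ^ m) (axPsi k hζ.pow_eq_one) := by
      rw [← pow_add, hsg, mul_comm f, pow_mul]
      have h5 : (γ ^ (p - 1)) ^ f ∣ (Fintype.card k : A) := by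
        rw [hf]; push_cast; exact (hγp.pow_pow).dvd
      refine h5.trans ?_
      rw [← h1, mul_comm]
      refine mul_dvd_mul_right (Dvd.dvd.trans ?_ h3) _
      exact Dvd.intro_left _ h2
    exact (mul_dvd_mul_iff_left (pow_ne_zero _ hγ0)).1 h4
  have h6 : (p : A) ^ (∑ j ∈ Finset.range f, axRot p f j m) ∣ (γ ^ axSg p m) ^ (Fintype.card k - 1) := by
    rw [← pow_mul, mul_comm, hf, ← axRot_sum hp1 m (by omega), pow_mul]
    exact (hγp.pow_pow).symm.dvd
  exact h6.trans (pow_dvd_pow_of_dvd key _)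

theorem ax_fourier {ζ : A} (hζ : IsPrimitiveRoot ζ p) {τ : k →*₀ A}
    {ι : k →+* IsLocalRing.ResidueField A}
    (hι : ∀ x, IsLocalRing.residue A (τ x) = ι x) (u : k) (hu : u ≠ 0) :
    ∑ m ∈ Finset.range (Fintype.card k - 1),
      gaussSum (axChi τ ^ m) (axPsi k hζ.pow_eq_one) * τ u ^ m =
      ((Fintype.card k - 1 : ℕ) : A) * axPsi k hζ.pow_eq_one u := by
  classical
  unfold gaussSum
  simp_rw [Finset.sum_mul]
  rw [Finset.sum_comm, Finset.sum_eq_single u]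
  · rw [Finset.sum_congr rfl (g := fun _ => axPsi k hζ.pow_eq_one u)]
    · simp
    · intro m _
      rw [axChi_pow_apply τ u hu, mul_right_comm, ← mul_pow, ← map_mul, inv_mul_cancel₀ hu]
      simp
  · intro x _ hxu
    rcases eq_or_ne x 0 with rfl | hx
    · simp [MulChar.map_zero]
    · rw [Finset.sum_congr rfl (g := fun m => axPsi k hζ.pow_eq_one x * τ (x⁻¹ * u) ^ m)]
      · rw [← Finset.mul_sum]
        have h1 : τ (x⁻¹ * u) - 1 ≠ 0 := by
          intro h
          have h2 : τ (x⁻¹ * u) = τ 1 := by rw [map_one]; exact sub_eq_zero.1 h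
          have h3 := ax_tau_inj hι h2
          apply hxu
          field_simp at h3
          exact h3.symm
        have h2 := geom_sum_mul (τ (x⁻¹ * u)) (Fintype.card k - 1)
        rw [← map_pow, FiniteField.pow_card_sub_one_eq_one _ (by simp [hx, hu]), map_one, sub_self] at h2
        rw [(mul_eq_zero.1 h2).resolve_right h1, mul_zero]
      · intro m _
        rw [axChi_pow_apply τ x hx, map_mul, mul_pow]; ring
  · simp

theorem ax_coeff {ζ : A} (hζ : IsPrimitiveRoot ζ p) {τ : k →*₀ A}
    {ι : k →+* IsLocalRing.ResidueField A}
    (hι : ∀ x, IsLocalRing.residue A (τ x) = ι x) (f : ℕ) (hf : Fintype.card k = p ^ f) :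
    ∃ c : ℕ → A, (∀ u : k, axPsi k hζ.pow_eq_one u =
        ∑ m ∈ Finset.range (Fintype.card k), c m * τ u ^ m) ∧
      ∀ m < Fintype.card k, (p : A) ^ (∑ j ∈ Finset.range f, axRot p f j m) ∣
        c m ^ (Fintype.card k - 1) := by
  have hp1 := hp.out.one_lt
  have hq2 : 2 ≤ Fintype.card k := Fintype.one_lt_card
  have hunit : IsUnit ((Fintype.card k - 1 : ℕ) : A) := by
    rw [← IsLocalRing.residue_ne_zero_iff_isUnit, map_natCast, ← map_natCast ι,
      Nat.cast_sub (by omega), Nat.cast_card_eq_zero]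
    simp
  obtain ⟨v, hv⟩ := hunit.exists_right_inv
  let G : ℕ → A := fun m => gaussSum (axChi τ ^ m) (axPsi k hζ.pow_eq_one)
  have hG0 : G 0 = -1 := by
    simp only [G, pow_zero]
    apply gaussSum_one_left
    have := axPsi_primitive (k := k) hζ
    intro h
    have := this one_ne_zero
    rw [AddChar.mulShift_one] at this
    exact this h
  refine ⟨fun m => if m = 0 then 1 else if m = Fintype.card k - 1 then -(Fintype.card k * v)
    else v * G m, ?_, ?_⟩
  · intro u
    obtain ⟨n, hn⟩ : ∃ n, Fintype.card k = n + 1 + 1 := ⟨Fintype.card k - 2, by omega⟩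
    have hmid : ∑ i ∈ Finset.range n, (if i + 1 = 0 then (1:A) else if i + 1 = Fintype.card k - 1 then
        -(Fintype.card k * v) else v * G (i+1)) * τ u ^ (i + 1)
        = v * ∑ i ∈ Finset.range n, G (i + 1) * τ u ^ (i + 1) := by
      rw [Finset.mul_sum]
      refine Finset.sum_congr rfl fun i hi => ?_
      have := Finset.mem_range.1 hi
      rw [if_neg (by omega), if_neg (by omega), mul_assoc]
    rw [show Finset.range (Fintype.card k) = Finset.range (n + 1 + 1) by rw [hn],
      Finset.sum_range_succ, Finset.sum_range_succ', hmid]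
    beta_reduce
    rw [if_pos rfl, if_neg (by omega), if_pos (by omega), pow_zero, mul_one]
    rcases eq_or_ne u 0 with rfl | hu
    · simp
    · have h1 := ax_fourier hζ hι u hu
      rw [show Finset.range (Fintype.card k - 1) = Finset.range (n + 1) by rw [hn]; rfl,
        Finset.sum_range_succ'] at h1
      change ∑ i ∈ Finset.range n, G (i + 1) * τ u ^ (i + 1) + G 0 * τ u ^ 0 = _ at h1
      rw [hG0] at h1
      have h2 : τ u ^ (n + 1) = 1 := by
        rw [← map_pow, show n + 1 = Fintype.card k - 1 by omega,
          FiniteField.pow_card_sub_one_eq_one u hu, map_one]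
      rw [h2]
      have h3 : ((Fintype.card k - 1 : ℕ) : A) = Fintype.card k - 1 := by
        rw [Nat.cast_sub (by omega)]; simp
      rw [h3] at h1 hv
      linear_combination (-v) * h1 + (1 - axPsi k hζ.pow_eq_one u) * hv
  · intro m hm
    dsimp only
    split_ifs with h0 h1
    · subst h0
      rw [Finset.sum_eq_zero fun j _ => (axRot_eq_zero hp1 0).2 rfl, pow_zero]
      exact one_dvd _
    · have h2 : ∑ j ∈ Finset.range f, axRot p f j m = f * (Fintype.card k - 1) := by
        have h3 := axRot_sum hp1 m (hf ▸ hm)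
        have h4 := axSg_compl hp1 f 0 (by positivity)
        rw [axSg_zero, ← hf, Nat.sub_zero, ← h1, add_zero] at h4
        rw [h4, ← hf] at h3
        apply Nat.eq_of_mul_eq_mul_left (show 0 < p - 1 by omega)
        rw [h3]; ring
      rw [h2, pow_mul]
      apply pow_dvd_pow_of_dvd
      rw [hf]; push_cast
      exact (Dvd.intro _ rfl).neg_right
    · have := ax_stickelberger hζ hι f hf m (by omega) (by omega)
      rw [mul_pow]
      exact this.mul_left _
end


section
variable {k A : Type*} [Field k] [Fintype k] [CommRing A] [IsDomain A] [IsLocalRing A]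
  [CharZero A] {p : ℕ} [hp : Fact p.Prime] [CharP k p] [Algebra (ZMod p) k]
set_option linter.unusedSectionVars false

theorem ax_char_sum {G R J : Type*} [AddCommMonoid G] [CommMonoid R] (φ : AddChar G R)
    (s : Finset J) (g : J → G) : φ (∑ j ∈ s, g j) = ∏ j ∈ s, φ (g j) := by
  classical
  induction s using Finset.induction_on with
  | empty => simp
  | insert a s ha ih => rw [Finset.sum_insert ha, Finset.prod_insert ha, AddChar.map_add_eq_mul, ih]

theorem ax_tau_sum {τ : k →*₀ A} {ι : k →+* IsLocalRing.ResidueField A}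
    (hι : ∀ x, IsLocalRing.residue A (τ x) = ι x) (e : ℕ) (he : ¬ Fintype.card k - 1 ∣ e) :
    ∑ z : k, τ z ^ e = 0 := by
  have h1 : ¬ ∀ x : kˣ, x ^ e = 1 := by rwa [FiniteField.forall_pow_eq_one_iff]
  push Not at h1
  obtain ⟨g, hg⟩ := h1
  have h2 : τ g ^ e - 1 ≠ 0 := by
    intro h
    apply hg
    have : τ ((g : k) ^ e) = τ 1 := by rw [map_pow, map_one]; exact sub_eq_zero.1 h
    have := ax_tau_inj hι this
    ext; simpa using this
  have h3 : ∑ z : k, τ (g * z) ^ e = ∑ z : k, τ z ^ e :=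
    Fintype.sum_bijective _ (mulLeft_bijective₀ (g : k) g.ne_zero) _ _ fun x => rfl
  simp_rw [map_mul, mul_pow] at h3
  rw [← Finset.mul_sum] at h3
  have h4 : (τ g ^ e - 1) * ∑ z : k, τ z ^ e = 0 := by rw [sub_mul, h3]; ring
  exact (mul_eq_zero.1 h4).resolve_left h2

theorem ax_expsum [IsIntegrallyClosed A] {ζ : A} (hζ : IsPrimitiveRoot ζ p) {τ : k →*₀ A}
    {ι : k →+* IsLocalRing.ResidueField A}
    (hι : ∀ x, IsLocalRing.residue A (τ x) = ι x) (f : ℕ) (hf : Fintype.card k = p ^ f)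
    {I V : Type*} [Fintype I] [Fintype V] [DecidableEq I] [DecidableEq V]
    (w : I → V → ℕ) (a : I → k) (B : ℕ)
    (hB : ∀ m : I → ℕ, (∀ v, Fintype.card k - 1 ∣ ∑ j, m j * w j v) →
      (Fintype.card k - 1) * B ≤ ∑ j, m j +
        (Fintype.card k - 1) * (Finset.univ.filter fun v => ∑ j, m j * w j v = 0).card) :
    (p : A) ^ (f * B) ∣ ∑ z : V → k, axPsi k hζ.pow_eq_one (∑ j, a j * ∏ v, z v ^ w j v) := by
  have hp1 := hp.out.one_lt
  have hq2 : 2 ≤ Fintype.card k := Fintype.one_lt_card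
  obtain ⟨c, hc, hcd⟩ := ax_coeff hζ hι f hf
  have hexp : ∑ z : V → k, axPsi k hζ.pow_eq_one (∑ j, a j * ∏ v, z v ^ w j v) =
      ∑ m ∈ Fintype.piFinset (fun _ : I => Finset.range (Fintype.card k)),
        (∏ j, c (m j) * τ (a j) ^ m j) * ∏ v, ∑ z : k, τ z ^ (∑ j, m j * w j v) := by
    have h1 : ∀ z : V → k, axPsi k hζ.pow_eq_one (∑ j, a j * ∏ v, z v ^ w j v) =
        ∑ m ∈ Fintype.piFinset (fun _ : I => Finset.range (Fintype.card k)),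
          (∏ j, c (m j) * τ (a j) ^ m j) * ∏ v, τ (z v) ^ (∑ j, m j * w j v) := by
      intro z
      rw [ax_char_sum]
      simp_rw [hc]
      rw [Finset.prod_univ_sum]
      refine Finset.sum_congr rfl fun m _ => ?_
      simp_rw [map_mul, mul_pow, ← mul_assoc]
      rw [Finset.prod_mul_distrib]
      congr 1
      simp_rw [map_prod, map_pow, ← Finset.prod_pow, ← Finset.prod_pow_eq_pow_sum]
      rw [Finset.prod_comm]
      refine Finset.prod_congr rfl fun v _ => Finset.prod_congr rfl fun j _ => ?_
      rw [← pow_mul, mul_comm]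
    simp_rw [h1]
    rw [Finset.sum_comm]
    refine Finset.sum_congr rfl fun m _ => ?_
    rw [← Finset.mul_sum]
    congr 1
    rw [Finset.prod_univ_sum, Fintype.piFinset_univ]
  rw [hexp]
  refine Finset.dvd_sum fun m hm => ?_
  have hm : ∀ j, m j < Fintype.card k := fun j => Finset.mem_range.1 (Fintype.mem_piFinset.1 hm j)
  by_cases hdiv : ∀ v, Fintype.card k - 1 ∣ ∑ j, m j * w j v
  swap
  · push Not at hdiv
    obtain ⟨v, hv⟩ := hdiv
    rw [Finset.prod_eq_zero (Finset.mem_univ v) (ax_tau_sum hι _ hv), mul_zero]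
    exact dvd_zero _
  rw [← IsIntegrallyClosed.pow_dvd_pow_iff (n := Fintype.card k - 1) (by omega)]
  set Z := Finset.univ.filter fun v => ∑ j, m j * w j v = 0 with hZ
  -- rotations
  have hrot : ∀ i ∈ Finset.range f, (Fintype.card k - 1) * B ≤
      ∑ j, axRot p f i (m j) + (Fintype.card k - 1) * Z.card := by
    intro i hi
    have h2 := hB (fun j => axRot p f i (m j)) ?_
    · refine h2.trans_eq ?_
      congr 3
      ext v
      simp only [Finset.mem_filter, Finset.mem_univ, true_and, Finset.sum_eq_zero_iff, hZ,
        Nat.mul_eq_zero, axRot_eq_zero hp1]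
    · intro v
      have h3 : ∑ j, axRot p f i (m j) * w j v +
          (Fintype.card k - 1) * ∑ j, (m j / p ^ (i + 1)) * w j v =
          p ^ (f - (i + 1)) * ∑ j, m j * w j v := by
        rw [Finset.mul_sum, Finset.mul_sum, ← Finset.sum_add_distrib]
        refine Finset.sum_congr rfl fun j _ => ?_
        rw [← mul_assoc, ← mul_assoc, ← add_mul, hf, axRot_spec hp1 (Finset.mem_range.1 hi)]
      have h4 : Fintype.card k - 1 ∣ p ^ (f - (i + 1)) * ∑ j, m j * w j v := (hdiv v).mul_left _
      rw [← h3] at h4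
      exact (Nat.dvd_add_left (Dvd.intro _ rfl)).1 h4
  have hsum : f * B * (Fintype.card k - 1) ≤
      ∑ j, ∑ i ∈ Finset.range f, axRot p f i (m j) + f * (Fintype.card k - 1) * Z.card := by
    have := Finset.sum_le_sum hrot
    rw [Finset.sum_const, Finset.sum_add_distrib, Finset.sum_const, Finset.card_range,
      Finset.sum_comm, smul_eq_mul, smul_eq_mul] at this
    calc _ = f * ((Fintype.card k - 1) * B) := by ring
      _ ≤ _ := this
      _ = _ := by ring
  rw [← pow_mul]
  refine (pow_dvd_pow _ hsum).trans ?_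
  rw [pow_add, mul_pow]
  refine mul_dvd_mul ?_ ?_
  · rw [← Finset.prod_pow_eq_pow_sum, ← Finset.prod_pow]
    refine Finset.prod_dvd_prod_of_dvd _ _ fun j _ => ?_
    rw [mul_pow]
    exact (hcd _ (hm j)).mul_right _
  · rw [mul_right_comm, pow_mul]
    apply pow_dvd_pow_of_dvd
    have h5 : (p : A) ^ (f * Z.card) = ∏ v ∈ Z, ∑ z : k, τ z ^ (∑ j, m j * w j v) := by
      rw [Finset.prod_congr rfl (g := fun _ => (p : A) ^ f)]
      · rw [Finset.prod_const, pow_mul]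
      · intro v hv
        rw [(Finset.mem_filter.1 hv).2]
        simp [hf]
    rw [h5]
    exact Finset.prod_dvd_prod_of_subset _ _ _ (Finset.subset_univ _)
end


theorem ax_comb {I : Type*} [Fintype I] (Q n t : ℕ) (hQ : 0 < Q) (d : Fin t → ℕ)
    (hsum : ∑ i, d i ≤ n) (M : ℕ) (hM0 : 0 < M) (hM : ∀ i, d i ≤ M)
    (r : ℕ) (hr : r = (n - ∑ i, d i + M - 1) / M)
    (π : I → Fin t) (e : I → Fin (n + 1) → ℕ) (he : ∀ j, ∑ l, e j l = d (π j))
    (w : I → Fin t ⊕ Fin (n + 1) → ℕ) (hw1 : ∀ j i, w j (Sum.inl i) = if π j = i then 1 else 0)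
    (hw2 : ∀ j l, w j (Sum.inr l) = e j l)
    (m : I → ℕ) (hm : ∀ v, Q ∣ ∑ j, m j * w j v) :
    Q * (t + r) ≤ ∑ j, m j +
      Q * (Finset.univ.filter fun v => ∑ j, m j * w j v = 0).card := by
  choose b hb using hm
  have hz : ∀ v, (∑ j, m j * w j v = 0) ↔ b v = 0 := by
    intro v; rw [hb]; simp [hQ.ne']
  simp_rw [hz]
  have h1 : ∑ j, m j = Q * ∑ i, b (Sum.inl i) := by
    rw [Finset.mul_sum]
    simp_rw [← hb, hw1]
    rw [Finset.sum_comm]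
    simp
  have h2 : ∑ l, b (Sum.inr l) = ∑ i, d i * b (Sum.inl i) := by
    apply Nat.eq_of_mul_eq_mul_left hQ
    rw [Finset.mul_sum, Finset.mul_sum]
    simp_rw [mul_left_comm Q (d _), ← hb, hw1, hw2, Finset.mul_sum]
    rw [Finset.sum_comm]
    rw [Finset.sum_comm (s := Finset.univ (α := Fin t))]
    refine Finset.sum_congr rfl fun j _ => ?_
    rw [← Finset.mul_sum, he]
    simp [mul_comm]
  rw [Finset.card_filter, Fintype.sum_sum_type, h1, ← mul_add]
  apply Nat.mul_le_mul_left
  have h3 : ∑ i, b (Sum.inl i) + ∑ i : Fin t, (if b (Sum.inl i) = 0 then 1 else 0) =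
      t + ∑ i, (b (Sum.inl i) - 1) := by
    have : t + ∑ i, (b (Sum.inl i) - 1) = ∑ i : Fin t, 1 + ∑ i, (b (Sum.inl i) - 1) := by simp
    rw [this, ← Finset.sum_add_distrib, ← Finset.sum_add_distrib]
    refine Finset.sum_congr rfl fun i _ => ?_
    split_ifs <;> omega
  rw [← add_assoc, h3, add_assoc]
  apply Nat.add_le_add_left
  set X1 := ∑ i, (b (Sum.inl i) - 1)
  set Z := ∑ i : Fin (n + 1), (if b (Sum.inr i) = 0 then 1 else 0)
  have h4 : n + 1 ≤ ∑ l, b (Sum.inr l) + Z := by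
    have : n + 1 = ∑ i : Fin (n + 1), 1 := by simp
    refine this.le.trans ?_
    rw [← Finset.sum_add_distrib]
    refine Finset.sum_le_sum fun i _ => ?_
    split_ifs <;> omega
  have h5 : ∑ i, d i * b (Sum.inl i) ≤ M * X1 + ∑ i, d i := by
    rw [Finset.mul_sum, ← Finset.sum_add_distrib]
    refine Finset.sum_le_sum fun i _ => ?_
    have := Nat.mul_le_mul_right (b (Sum.inl i) - 1) (hM i)
    rcases Nat.eq_zero_or_pos (b (Sum.inl i)) with h | h
    · simp [h]
    · obtain ⟨c, hc⟩ := Nat.exists_eq_add_of_lt h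
      rw [hc] at this ⊢
      simp at this ⊢
      linarith
  have h6 : Z ≤ M * Z := Nat.le_mul_of_pos_left _ hM0
  rw [hr]
  apply Nat.le_of_lt_succ
  rw [Nat.div_lt_iff_lt_mul hM0]
  have : (X1 + Z).succ * M = M * X1 + M * Z + M := by rw [Nat.succ_eq_add_one]; ring
  rw [this]
  omega

section
variable {k A : Type*} [Field k] [Fintype k] [CommRing A] [IsDomain A] [IsLocalRing A]
  [CharZero A] {p : ℕ} [hp : Fact p.Prime] [CharP k p] [Algebra (ZMod p) k]
set_option linter.unusedSectionVars false

theorem ax_count {ζ : A} (hζ : IsPrimitiveRoot ζ p) {t N : ℕ}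
    (F : Fin t → MvPolynomial (Fin N) k) :
    ∑ z : Fin t ⊕ Fin N → k, axPsi k hζ.pow_eq_one
      (∑ j : (Σ i, {e // e ∈ (F i).support}), (F j.1).coeff j.2.1 *
        ∏ v, z v ^ (Sum.elim (fun i => if j.1 = i then 1 else 0) (fun l => j.2.1 l) v : ℕ)) =
    (Fintype.card k : A) ^ t * (Nat.card {x : Fin N → k // ∀ i, eval x (F i) = 0} : ℕ) := by
  classical
  have h1 : ∀ z : Fin t ⊕ Fin N → k,
      (∑ j : (Σ i, {e // e ∈ (F i).support}), (F j.1).coeff j.2.1 *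
        ∏ v, z v ^ (Sum.elim (fun i => if j.1 = i then 1 else 0) (fun l => j.2.1 l) v : ℕ)) =
      ∑ i, z (Sum.inl i) * eval (fun l => z (Sum.inr l)) (F i) := by
    intro z
    rw [Fintype.sum_sigma]
    refine Finset.sum_congr rfl fun i _ => ?_
    rw [eval_eq', Finset.mul_sum]
    rw [← Finset.sum_coe_sort (F i).support]
    refine Finset.sum_congr rfl fun e _ => ?_
    rw [Fintype.prod_sum_type]
    simp only [Sum.elim_inl, Sum.elim_inr, pow_ite, pow_one, pow_zero]
    rw [Finset.prod_ite_eq]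
    simp
    ring
  simp_rw [h1]
  rw [← (Equiv.sumArrowEquivProdArrow (Fin t) (Fin N) k).symm.sum_comp, Fintype.sum_prod_type_right]
  simp only [Equiv.sumArrowEquivProdArrow_symm_apply_inl, Equiv.sumArrowEquivProdArrow_symm_apply_inr]
  have h2 : ∀ x : Fin N → k, ∑ y : Fin t → k, axPsi k hζ.pow_eq_one (∑ i, y i * eval x (F i)) =
      if (∀ i, eval x (F i) = 0) then (Fintype.card k : A) ^ t else 0 := by
    intro x
    simp_rw [ax_char_sum]
    have := Finset.prod_univ_sum (fun _ : Fin t => (Finset.univ : Finset k))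
      (fun i y => axPsi k hζ.pow_eq_one (y * eval x (F i)))
    rw [Fintype.piFinset_univ] at this
    rw [← this]
    simp_rw [AddChar.sum_mulShift _ (axPsi_primitive hζ)]
    split_ifs with h
    · simp [h]
    · push Not at h
      obtain ⟨i, hi⟩ := h
      exact Finset.prod_eq_zero (Finset.mem_univ i) (by simp [hi])
  refine (Finset.sum_congr rfl fun x _ => h2 x).trans ?_
  rw [← Finset.sum_filter, Finset.sum_const, nsmul_eq_mul, mul_comm, Nat.card_eq_fintype_card,
    Fintype.card_subtype]

theorem ax_descend (ι : k →+* IsLocalRing.ResidueField A) (N s : ℕ)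
    (h : (p : A) ^ s ∣ (N : A)) : p ^ s ∣ N := by
  haveI := ax_charP (p := p) ι
  rcases Nat.eq_zero_or_pos N with h0 | h0
  · simp [h0]
  obtain ⟨e, u, hu, rfl⟩ := Nat.exists_eq_pow_mul_and_not_dvd h0.ne' p hp.out.ne_one
  have hU : IsUnit (u : A) := by
    by_contra hn
    apply hu
    have : IsLocalRing.residue A (u : A) = 0 := by
      rw [IsLocalRing.residue_eq_zero_iff]; exact hn
    rw [map_natCast] at this
    exact (CharP.cast_eq_zero_iff (IsLocalRing.ResidueField A) p u).1 this
  have hP : ¬ IsUnit (p : A) := by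
    have : IsLocalRing.residue A (p : A) = 0 := by
      rw [map_natCast]; exact CharP.cast_eq_zero _ p
    rw [IsLocalRing.residue_eq_zero_iff] at this
    exact this
  push_cast at h
  rw [hU.dvd_mul_right, pow_dvd_pow_iff (by exact_mod_cast hp.out.ne_zero) hP] at h
  exact Dvd.dvd.mul_right (pow_dvd_pow _ h) _
end

theorem ax_affine (k : Type*) [Field k] [Fintype k]
    (n t : ℕ) (d : Fin t → ℕ) (hsum : ∑ i, d i ≤ n)
    (F : Fin t → MvPolynomial (Fin (n + 1)) k)
    (hF : ∀ i, (F i).IsHomogeneous (d i))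
    (M : ℕ) (hM0 : 0 < M) (hM : ∀ i, d i ≤ M)
    (r : ℕ) (hr : r = (n - ∑ i, d i + M - 1) / M) :
    Fintype.card k ^ r ∣ Nat.card {x : Fin (n + 1) → k // ∀ i, eval x (F i) = 0} := by
  classical
  obtain ⟨p, hc⟩ := CharP.exists k
  obtain ⟨f, hp, hf⟩ := FiniteField.card k p
  haveI : Fact p.Prime := ⟨hp⟩
  letI : Algebra (ZMod p) k := ZMod.algebra k p
  obtain ⟨L, _, A, ζ, τ, ι, _, hζ, hι⟩ := ax_ring k p
  have hq2 : 2 ≤ Fintype.card k := Fintype.one_lt_card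
  have key := ax_expsum hζ hι f hf
    (I := Σ i, {e // e ∈ (F i).support}) (V := Fin t ⊕ Fin (n + 1))
    (fun j v => Sum.elim (fun i => if j.1 = i then 1 else 0) (fun l => j.2.1 l) v)
    (fun j => (F j.1).coeff j.2.1) (t + r) ?_
  · rw [ax_count hζ F] at key
    rw [hf, ← pow_mul]
    apply ax_descend ι
    rw [mul_add, pow_add, hf] at key
    push_cast at key
    rw [← pow_mul] at key
    refine (mul_dvd_mul_iff_left ?_).1 key
    exact pow_ne_zero _ (by exact_mod_cast hp.ne_zero)
  · intro m hm
    refine ax_comb (Fintype.card k - 1) n t (by omega) d hsum M hM0 hM r hr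
      (fun j => j.1) (fun j l => j.2.1 l) ?_ _ ?_ ?_ m hm
    · rintro ⟨i, e, he⟩
      have := hF i (mem_support_iff.1 he)
      rw [Finsupp.weight_apply, Finsupp.sum_fintype _ _ (by simp)] at this
      simpa using this
    · intros; rfl
    · intros; rfl


theorem ax_eval_smul {k σ : Type*} [Field k] [Fintype σ] (F : MvPolynomial σ k) (d : ℕ)
    (hF : F.IsHomogeneous d) (c : k) (x : σ → k) : eval (c • x) F = c ^ d * eval x F := by
  rw [eval_eq', eval_eq', Finset.mul_sum]
  refine Finset.sum_congr rfl fun e he => ?_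
  have := hF (mem_support_iff.1 he)
  rw [Finsupp.weight_apply, Finsupp.sum_fintype _ _ (by simp)] at this
  have h2 : ∑ i, e i = d := by simpa using this
  simp only [Pi.smul_apply, smul_eq_mul, mul_pow]
  rw [Finset.prod_mul_distrib, Finset.prod_pow_eq_pow_sum, h2]
  ring

theorem ax_proj_count (k : Type*) [Field k] [Fintype k] (n t : ℕ)
    (d : Fin t → ℕ) (hd : ∀ i, 0 < d i)
    (F : Fin t → MvPolynomial (Fin (n + 1)) k)
    (hF : ∀ i, (F i).IsHomogeneous (d i)) :
    Nat.card {x : Fin (n + 1) → k // ∀ i, eval x (F i) = 0} =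
    Nat.card {x : Projectivization k (Fin (n + 1) → k) // ∀ i, eval x.rep (F i) = 0} *
      (Fintype.card k - 1) + 1 := by
  classical
  have h0 : ∀ i, eval (0 : Fin (n + 1) → k) (F i) = 0 := by
    intro i
    have := ax_eval_smul (F i) (d i) (hF i) 0 0
    rw [zero_smul, zero_pow (hd i).ne', zero_mul] at this
    exact this
  let S := {x : Projectivization k (Fin (n + 1) → k) // ∀ i, eval x.rep (F i) = 0}
  let g : Option (S × kˣ) → {x : Fin (n + 1) → k // ∀ i, eval x (F i) = 0} := fun o =>
    match o with
    | none => ⟨0, h0⟩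
    | some y => ⟨(y.2 : k) • y.1.1.rep, fun i => by
        rw [ax_eval_smul (F i) (d i) (hF i), y.1.2 i, mul_zero]⟩
  have hg : Function.Bijective g := by
    constructor
    · rintro (_ | ⟨x, u⟩) (_ | ⟨y, v⟩) h
      · rfl
      · have h := congrArg Subtype.val h
        exact absurd h.symm (smul_ne_zero v.ne_zero y.1.rep_nonzero)
      · have h := congrArg Subtype.val h
        exact absurd h (smul_ne_zero u.ne_zero x.1.rep_nonzero)
      · have h : (u : k) • x.1.rep = (v : k) • y.1.rep := congrArg Subtype.val h
        have hxy : x = y := by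
          apply Subtype.ext
          rw [← x.1.mk_rep, ← y.1.mk_rep, Projectivization.mk_eq_mk_iff']
          refine ⟨(u : k)⁻¹ * v, ?_⟩
          rw [mul_smul, ← h, inv_smul_smul₀ u.ne_zero]
        subst hxy
        have : (u : k) = v := smul_left_injective k x.1.rep_nonzero h
        rw [Units.ext this]
    · rintro ⟨v, hv⟩
      by_cases hv0 : v = 0
      · exact ⟨none, Subtype.ext hv0.symm⟩
      · obtain ⟨a, ha⟩ := Projectivization.exists_smul_eq_mk_rep k v hv0
        have ha : (a : k) • v = (Projectivization.mk k v hv0).rep := ha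
        refine ⟨some (⟨Projectivization.mk k v hv0, fun i => ?_⟩, a⁻¹), Subtype.ext ?_⟩
        · rw [← ha, ax_eval_smul (F i) (d i) (hF i), hv i, mul_zero]
        · change ((a⁻¹ : kˣ) : k) • (Projectivization.mk k v hv0).rep = v
          rw [← ha, Units.val_inv_eq_inv_val, inv_smul_smul₀ a.ne_zero]
  have hfin : Finite (Projectivization k (Fin (n + 1) → k)) :=
    (Projectivization.finite_iff_of_finite _ _).2 inferInstance
  have : Finite S := Subtype.finite
  rw [← Nat.card_congr (Equiv.ofBijective g hg), Finite.card_option, Nat.card_prod,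
    Nat.card_eq_fintype_card (α := kˣ), Fintype.card_units]

/-- Projective Ax–Katz congruence: for homogeneous polynomials F_1,...,F_t of
degrees d_1,...,d_t in n+1 variables over F_q with d = ∑ d_i ≤ n and
r = ⌈(n - d)/max_i d_i⌉ ≥ 1, the number of points of the projective zero set
in P^n(F_q) is congruent to 1 + q + ... + q^(r-1) modulo q^r. -/
theorem projective_ax_katz (k : Type*) [Field k] [Fintype k]
    (q n t : ℕ) (hq : Fintype.card k = q) (ht : 1 ≤ t) (hn : 1 ≤ n)
    (d : Fin t → ℕ) (hd : ∀ i, 0 < d i)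
    (hsum : ∑ i, d i ≤ n)
    (F : Fin t → MvPolynomial (Fin (n + 1)) k)
    (hF : ∀ i, (F i).IsHomogeneous (d i))
    (M : ℕ) (hM : ∀ (h : (Finset.univ : Finset (Fin t)).Nonempty),
      M = Finset.univ.sup' h d)
    (r : ℕ) (hr : r = (n - ∑ i, d i + M - 1) / M) (hr1 : 1 ≤ r) :
    Nat.card {x : Projectivization k (Fin (n + 1) → k) //
        ∀ i, MvPolynomial.eval x.rep (F i) = 0} ≡
      ∑ i ∈ Finset.range r, q ^ i [MOD q ^ r] := by
  have hM2 : ∀ i, d i ≤ M := by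
    intro i
    rw [hM ⟨i, Finset.mem_univ i⟩]
    exact Finset.le_sup' d (Finset.mem_univ i)
  have hM0 : 0 < M := (hd ⟨0, ht⟩).trans_le (hM2 _)
  have h1 := ax_affine k n t d hsum F hF M hM0 hM2 r hr
  rw [ax_proj_count k n t d hd F hF, hq] at h1
  have hq2 : 2 ≤ q := hq ▸ Fintype.one_lt_card
  set N := Nat.card {x : Projectivization k (Fin (n + 1) → k) //
        ∀ i, MvPolynomial.eval x.rep (F i) = 0}
  have h2 : (∑ i ∈ Finset.range r, q ^ i) * (q - 1) + 1 = q ^ r := by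
    rw [Nat.geomSum_eq hq2, Nat.div_mul_cancel (by simpa using Nat.sub_dvd_pow_sub_pow q 1 r)]
    have := Nat.one_le_pow r q (by omega)
    omega
  have h3 : N * (q - 1) + 1 ≡ (∑ i ∈ Finset.range r, q ^ i) * (q - 1) + 1 [MOD q ^ r] := by
    rw [h2]
    exact ((Nat.modEq_zero_iff_dvd.2 h1).trans (Nat.modEq_zero_iff_dvd.2 dvd_rfl).symm)
  have h4 := Nat.ModEq.add_right_cancel' 1 h3
  refine Nat.ModEq.cancel_right_of_coprime ?_ h4
  apply Nat.Coprime.pow_left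
  have : Nat.Coprime (q - 1 + 1) (q - 1) := by simp
  rwa [Nat.sub_add_cancel (by omega)] at this
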